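/- arXiv:2105.15069 — 3 statements merged into one kernel-verified Lean document; each statement's English description precedes it below -/
import Mathlib

section
/- Suppose L is a tree distance, i.e., there is a simple graph T on vertex set Y which is a tree (connected with no cycles) and a weight function w assigning a strictly positive real to each edge of T, such that L y y' equals the sum of the weights of the edges of the unique path in T from y to y', for all y, y'. Then the Max-Margin loss embeds 2L with embedding ψ(y) = −L_y; more precisely: (a) H_M(q) = 2 · H_L(q) for all q ∈ Δ; (b) for all q ∈ Δ and y ∈ Y, y ∈ y⋆(q) if and only if the vector (−L y y')_{y'∈Y} belongs to v⋆_M(q); and (c) S_M((−L y y')_{y'∈Y}, z) = 2 · L y z for all y, z ∈ Y. -/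
open Finset Set

variable {Y : Type*} [Fintype Y] [DecidableEq Y] [Nonempty Y]

/-- Probability simplex over `Y`. -/
def simplexSet (Y : Type*) [Fintype Y] : Set (Y → ℝ) :=
  {q | (∀ y, 0 ≤ q y) ∧ ∑ y, q y = 1}

/-- Bayes risk of the discrete loss `L`. -/
noncomputable def HL (L : Y → Y → ℝ) (q : Y → ℝ) : ℝ :=
  ⨅ y : Y, ∑ y', L y y' * q y'

/-- Optimal-label set. -/
noncomputable def ystar (L : Y → Y → ℝ) (q : Y → ℝ) : Set Y :=
  {y | ∑ y', L y y' * q y' = HL L q}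

/-- Prediction set of label `y`. -/
noncomputable def predSet (L : Y → Y → ℝ) (y : Y) : Set (Y → ℝ) :=
  {q ∈ simplexSet Y | y ∈ ystar L q}

/-- Max-Margin loss. -/
noncomputable def SM (L : Y → Y → ℝ) (v : Y → ℝ) (y : Y) : ℝ :=
  ⨆ y' : Y, (L y y' + v y' - v y)

/-- Bayes risk of the Max-Margin loss. -/
noncomputable def HM (L : Y → Y → ℝ) (q : Y → ℝ) : ℝ :=
  ⨅ v : Y → ℝ, ∑ y, q y * SM L v y

/-- Conditional-risk minimizers of the Max-Margin loss. -/
noncomputable def vstarM (L : Y → Y → ℝ) (q : Y → ℝ) : Set (Y → ℝ) :=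
  {v | ∑ y, q y * SM L v y = HM L q}

/-- Restricted-Max-Margin loss. -/
noncomputable def SRM (L : Y → Y → ℝ) (v : Y → ℝ) (y : Y) : ℝ :=
  sSup ((fun q => ∑ y', L y y' * q y' + ∑ z, v z * q z) '' predSet L y) - v y

/-- Bayes risk of the Restricted-Max-Margin loss. -/
noncomputable def HRM (L : Y → Y → ℝ) (q : Y → ℝ) : ℝ :=
  ⨅ v : Y → ℝ, ∑ y, q y * SRM L v y

/-- Conditional-risk minimizers of the Restricted-Max-Margin loss. -/
noncomputable def vstarRM (L : Y → Y → ℝ) (q : Y → ℝ) : Set (Y → ℝ) :=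
  {v | ∑ y, q y * SRM L v y = HRM L q}

/-- Max-Min-Margin loss. -/
noncomputable def SMM (L : Y → Y → ℝ) (v : Y → ℝ) (y : Y) : ℝ :=
  sSup ((fun q => (⨅ z : Y, ∑ y', L z y' * q y') + ∑ z, v z * q z) '' simplexSet Y) - v y

/-- Bayes risk of the Max-Min-Margin loss. -/
noncomputable def HMM (L : Y → Y → ℝ) (q : Y → ℝ) : ℝ :=
  ⨅ v : Y → ℝ, ∑ y, q y * SMM L v y

/-- Transportation polytope `U(q, q)`. -/
def Upoly (q : Y → ℝ) : Set (Y → Y → ℝ) :=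
  {Q | (∀ y y', 0 ≤ Q y y') ∧ (∀ y, ∑ y', Q y y' = q y) ∧ (∀ y', ∑ y, Q y y' = q y')}

/-- The constraint set `C_L`. -/
def CL (L : Y → Y → ℝ) : Set (Y → Y → ℝ) :=
  {Q | ∀ y z : Y, ∑ y', L y y' * Q y y' ≤ ∑ y', L z y' * Q y y'}

/-!
Put `h = S_M(v, ·) / 2`. Testing the maxima in `S_M(v, y)` and `S_M(v, z)` at each other's label
cancels `v` and leaves `L y z ≤ h y + h z`, and `H_M ≥ 2 H_L` amounts to `⟨L_a, q⟩ ≤ ⟨h, q⟩` for a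
minimizer `a` of `⟨L_a, q⟩`, i.e. for a weighted median of the tree. If the slack `g = h - L_a` is
negative somewhere, let `m` minimize it and let `b` be the neighbour of `a` on the way to `m`.
Labels on the side of `b` have slack at least `g m` and are closer to `b` by `L a b`; for a label
`z` on the side of `a`, the path from `m` to `z` passes through `a`, so `g z ≥ -g m`, and `z` is
farther from `b` by `L a b`. Both cases say `-g m * (L b z - L a z) ≤ L a b * g z`; averaging over
`q` gives `⟨g, q⟩ ≥ 0`, since `a` is a median.
-/

section PathDist

open SimpleGraph

variable {V R : Type*} {G : SimpleGraph V}

/-- Total weight of the edges of a walk, counted with multiplicity. -/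
def walkWeight [AddMonoid R] (w : Sym2 V → R) {a b : V} (p : G.Walk a b) : R :=
  (p.edges.map w).sum

/-- `d` is a path distance of `G` with edge weights `w`: every path from `a` to `b` has weight
`d a b`. In a tree this determines `d`; pairs in different components are unconstrained. -/
def IsPathDist [AddMonoid R] (G : SimpleGraph V) (w : Sym2 V → R) (d : V → V → R) : Prop :=
  ∀ (a b : V) (p : G.Walk a b), p.IsPath → d a b = walkWeight w p

/-- `b` is a first step from `a` toward `y`: it lies at positive distance from `a`, and each point
`z` is either beyond `b` as seen from `a`, or on the side of `a`, in which case `a` lies between `z`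
and both `b` and `y`. The bound `H_M ≥ 2 H_L` uses the tree only through the existence
of first steps. -/
def IsStepToward [Zero R] [Add R] [LT R] (d : V → V → R) (a b y : V) : Prop :=
  0 < d a b ∧ ∀ z, d a z = d a b + d b z ∨ (d b z = d b a + d a z ∧ d y z = d y a + d a z)

theorem walkWeight_append [AddMonoid R] (w : Sym2 V → R) {a b c : V} (p : G.Walk a b)
    (r : G.Walk b c) : walkWeight w (p.append r) = walkWeight w p + walkWeight w r := by
  simp [walkWeight]

theorem walkWeight_reverse [AddCommMonoid R] (w : Sym2 V → R) {a b : V} (p : G.Walk a b) :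
    walkWeight w p.reverse = walkWeight w p := by
  simp [walkWeight, List.sum_reverse]

theorem walkWeight_bypass_le [DecidableEq V] [AddCommMonoid R] [PartialOrder R]
    [IsOrderedAddMonoid R] {w : Sym2 V → R} (hw : ∀ e ∈ G.edgeSet, 0 ≤ w e) {a b : V}
    (p : G.Walk a b) : walkWeight w p.bypass ≤ walkWeight w p := by
  refine (p.edges_bypass_sublist_edges.map w).sum_le_sum fun x hx => ?_
  obtain ⟨e, he, rfl⟩ := List.mem_map.1 hx
  exact hw e (p.edges_subset_edgeSet he)

theorem isPath_append_cons (hG : G.IsAcyclic) {a b y z : V} {h : G.Adj b a} {p : G.Walk y b}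
    {s : G.Walk a z} (hp : (p.concat h).IsPath) (hs : (Walk.cons h s).IsPath) :
    (p.append (.cons h s)).IsPath := by
  -- In a forest a walk is a path as soon as no two consecutive edges agree, a local condition.
  rw [hG.isPath_iff_isChain] at hp hs ⊢
  rw [Walk.edges_append, Walk.edges_cons, List.isChain_split]
  exact ⟨by simpa [Walk.edges_concat] using hp, by simpa using hs⟩

namespace IsPathDist

section AddMonoid

variable [AddMonoid R] {w : Sym2 V → R} {d : V → V → R}

theorem self_eq_zero (hd : IsPathDist G w d) (a : V) : d a a = 0 :=
  hd a a .nil .nil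

theorem eq_weight_of_adj (hd : IsPathDist G w d) {a b : V} (h : G.Adj a b) :
    d a b = w s(a, b) := by
  rw [hd a b h.toWalk (by simp [h.ne])]
  simp [walkWeight]

theorem eq_add_of_mem_support (hd : IsPathDist G w d) {a b c : V} {p : G.Walk a c}
    (hp : p.IsPath) (hb : b ∈ p.support) : d a c = d a b + d b c := by
  classical
  rw [hd a b _ (hp.takeUntil hb), hd b c _ (hp.dropUntil hb), hd a c p hp, ← walkWeight_append,
    p.take_spec hb]

theorem exists_isStepToward [LT R] (hd : IsPathDist G w d) (hG : G.IsTree)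
    (hw : ∀ e ∈ G.edgeSet, 0 < w e) {a y : V} (hay : a ≠ y) : ∃ b, IsStepToward d a b y := by
  obtain ⟨p, hp⟩ := hG.connected.exists_isPath a y
  cases p with
  | nil => exact absurd rfl hay
  | @cons _ b _ h p =>
    refine ⟨b, by rw [hd.eq_weight_of_adj h]; exact hw _ h, fun z => ?_⟩
    obtain ⟨s, hs⟩ := hG.connected.exists_isPath a z
    by_cases hb : b ∈ s.support
    · exact .inl (hd.eq_add_of_mem_support hs hb)
    · have hbs : (Walk.cons h.symm s).IsPath := hs.cons hb
      have hya : (p.reverse.concat h.symm).IsPath := by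
        simpa [Walk.concat_eq_append] using hp.reverse
      exact .inr ⟨hd.eq_add_of_mem_support hbs (by simp),
        hd.eq_add_of_mem_support (isPath_append_cons hG.isAcyclic hya hbs) (by simp)⟩

end AddMonoid

variable [AddCommMonoid R] {w : Sym2 V → R} {d : V → V → R}

theorem symm (hd : IsPathDist G w d) (hG : G.Preconnected) (a b : V) : d a b = d b a := by
  obtain ⟨p, hp⟩ := hG.exists_isPath a b
  rw [hd a b p hp, hd b a p.reverse hp.reverse, walkWeight_reverse]

theorem triangle [PartialOrder R] [IsOrderedAddMonoid R] (hd : IsPathDist G w d)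
    (hG : G.Preconnected) (hw : ∀ e ∈ G.edgeSet, 0 ≤ w e) (a b c : V) :
    d a c ≤ d a b + d b c := by
  classical
  obtain ⟨p, hp⟩ := hG.exists_isPath a b
  obtain ⟨r, hr⟩ := hG.exists_isPath b c
  calc d a c = walkWeight w (p.append r).bypass := hd a c _ (p.append r).bypass_isPath
    _ ≤ walkWeight w (p.append r) := walkWeight_bypass_le hw _
    _ = d a b + d b c := by rw [walkWeight_append, hd a b p hp, hd b c r hr]

end IsPathDist

end PathDist

section MaxMargin

variable {V : Type*} {L : V → V → ℝ} {q : V → ℝ}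

theorem IsStepToward.mul_sub_le {a b m : V} (hb : IsStepToward L a b m)
    (hsymm : ∀ y z, L y z = L z y) {h : V → ℝ} (hh : ∀ y z, L y z ≤ h y + h z)
    (hm : ∀ z, h m - L a m ≤ h z - L a z) (z : V) :
    (L a m - h m) * (L b z - L a z) ≤ L a b * (h z - L a z) := by
  obtain ⟨hpos, hside⟩ := hb
  rcases hside z with hz | ⟨hz, hmz⟩
  · calc (L a m - h m) * (L b z - L a z) = L a b * (h m - L a m) := by rw [hz]; ring
      _ ≤ L a b * (h z - L a z) := mul_le_mul_of_nonneg_left (hm z) hpos.le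
  · have hslack : L a m - h m ≤ h z - L a z := by linarith [hh m z, hsymm a m]
    calc (L a m - h m) * (L b z - L a z) = L a b * (L a m - h m) := by rw [hz, hsymm b a]; ring
      _ ≤ L a b * (h z - L a z) := mul_le_mul_of_nonneg_left hslack hpos.le

theorem le_SM [Finite V] (L : V → V → ℝ) (v : V → ℝ) (y z : V) : L y z + v z - v y ≤ SM L v y :=
  le_ciSup (f := fun z => L y z + v z - v y) (Set.finite_range _).bddAbove z

theorem add_le_SM_add_SM [Finite V] (L : V → V → ℝ) (v : V → ℝ) (y z : V) :
    L y z + L z y ≤ SM L v y + SM L v z := by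
  linarith [le_SM L v y z, le_SM L v z y]

theorem SM_neg_row [Finite V] (hself : ∀ a, L a a = 0) (hsymm : ∀ a b, L a b = L b a)
    (htri : ∀ a b c, L a c ≤ L a b + L b c) (y z : V) :
    SM L (fun y' => -(L y y')) z = 2 * L y z := by
  have : Nonempty V := ⟨y⟩
  refine le_antisymm (ciSup_le fun x => ?_) ?_
  · linarith [htri z y x, hsymm y z]
  · linarith [le_SM L (fun y' => -(L y y')) z y, hself y, hsymm y z]

variable [Fintype V]

theorem exists_sum_eq_HL [Nonempty V] (L : V → V → ℝ) (q : V → ℝ) :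
    ∃ y, ∑ z, L y z * q z = HL L q :=
  exists_eq_ciInf_of_finite (f := fun y => ∑ z, L y z * q z)

theorem HL_le_sum (L : V → V → ℝ) (q : V → ℝ) (y : V) : HL L q ≤ ∑ z, L y z * q z :=
  ciInf_le (Set.finite_range _).bddBelow y

theorem IsStepToward.mul_sum_sub_le {a b m : V} (hb : IsStepToward L a b m)
    (hsymm : ∀ y z, L y z = L z y) {h : V → ℝ} (hh : ∀ y z, L y z ≤ h y + h z)
    (hm : ∀ z, h m - L a m ≤ h z - L a z) (hq : ∀ z, 0 ≤ q z) :
    (L a m - h m) * (∑ z, L b z * q z - ∑ z, L a z * q z) ≤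
      L a b * ∑ z, (h z - L a z) * q z := by
  simp only [← Finset.sum_sub_distrib, ← sub_mul, Finset.mul_sum, ← mul_assoc]
  exact Finset.sum_le_sum fun z _ =>
    mul_le_mul_of_nonneg_right (hb.mul_sub_le hsymm hh hm z) (hq z)

theorem HL_le_sum_mul_of_le_add [Nonempty V] (hself : ∀ a, L a a = 0)
    (hsymm : ∀ a b, L a b = L b a) (hstep : ∀ a y, a ≠ y → ∃ b, IsStepToward L a b y)
    (hq : ∀ y, 0 ≤ q y) {h : V → ℝ} (hh : ∀ y z, L y z ≤ h y + h z) :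
    HL L q ≤ ∑ z, h z * q z := by
  obtain ⟨a, ha⟩ := exists_sum_eq_HL L q
  obtain ⟨m, hm⟩ := Finite.exists_min fun z => h z - L a z
  suffices hslack : 0 ≤ ∑ z, (h z - L a z) * q z by
    simpa only [sub_mul, Finset.sum_sub_distrib, ha, sub_nonneg] using hslack
  rcases le_or_gt 0 (h m - L a m) with hm₀ | hm₀
  · exact Finset.sum_nonneg fun z _ => mul_nonneg (hm₀.trans (hm z)) (hq z)
  have ham : a ≠ m := by
    rintro rfl
    linarith [hh a a, hself a]
  obtain ⟨b, hb⟩ := hstep a m ham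
  have hmedian : 0 ≤ ∑ z, L b z * q z - ∑ z, L a z * q z := by
    rw [ha]
    exact sub_nonneg.2 (HL_le_sum L q b)
  refine nonneg_of_mul_nonneg_right ?_ hb.1
  calc 0 ≤ (L a m - h m) * (∑ z, L b z * q z - ∑ z, L a z * q z) :=
        mul_nonneg (by linarith) hmedian
    _ ≤ L a b * ∑ z, (h z - L a z) * q z := hb.mul_sum_sub_le hsymm hh hm hq

theorem two_mul_HL_le_sum_mul_SM [Nonempty V] (hself : ∀ a, L a a = 0)
    (hsymm : ∀ a b, L a b = L b a) (hstep : ∀ a y, a ≠ y → ∃ b, IsStepToward L a b y)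
    (hq : ∀ y, 0 ≤ q y) (v : V → ℝ) : 2 * HL L q ≤ ∑ y, q y * SM L v y := by
  have hh : ∀ y z, L y z ≤ SM L v y / 2 + SM L v z / 2 := fun y z => by
    linarith [add_le_SM_add_SM L v y z, hsymm y z]
  calc 2 * HL L q ≤ 2 * ∑ y, SM L v y / 2 * q y := by
        gcongr
        exact HL_le_sum_mul_of_le_add hself hsymm hstep hq hh
    _ = ∑ y, q y * SM L v y := by
        rw [Finset.mul_sum]
        exact Finset.sum_congr rfl fun y _ => by ring

theorem sum_mul_SM_neg_row (hembed : ∀ y z, SM L (fun y' => -(L y y')) z = 2 * L y z)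
    (q : V → ℝ) (y : V) :
    ∑ z, q z * SM L (fun y' => -(L y y')) z = 2 * ∑ z, L y z * q z := by
  rw [Finset.mul_sum]
  exact Finset.sum_congr rfl fun z _ => by rw [hembed]; ring

theorem HM_eq_two_mul_HL [Nonempty V]
    (hembed : ∀ y z, SM L (fun y' => -(L y y')) z = 2 * L y z)
    (hlower : ∀ v, 2 * HL L q ≤ ∑ y, q y * SM L v y) : HM L q = 2 * HL L q := by
  obtain ⟨a, ha⟩ := exists_sum_eq_HL L q
  refine le_antisymm ?_ (le_ciInf hlower)
  calc HM L q ≤ ∑ z, q z * SM L (fun y' => -(L a y')) z :=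
        ciInf_le ⟨2 * HL L q, Set.forall_mem_range.2 hlower⟩ _
    _ = 2 * HL L q := by rw [sum_mul_SM_neg_row hembed, ha]

theorem mem_ystar_iff_neg_row_mem_vstarM
    (hembed : ∀ y z, SM L (fun y' => -(L y y')) z = 2 * L y z) (hHM : HM L q = 2 * HL L q)
    (y : V) : y ∈ ystar L q ↔ (fun y' => -(L y y')) ∈ vstarM L q := by
  change _ = _ ↔ _ = _
  rw [sum_mul_SM_neg_row hembed, hHM, mul_right_inj' two_ne_zero]

end MaxMargin

theorem stmt1 (Y : Type*) [Fintype Y] [DecidableEq Y] [Nonempty Y] (L : Y → Y → ℝ)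
    (hcard : 2 ≤ Fintype.card Y)
    (hnonneg : ∀ y y', 0 ≤ L y y')
    (hzero : ∀ y y', L y y' = 0 ↔ y = y')
    (T : SimpleGraph Y) (hT : T.IsTree) (w : Sym2 Y → ℝ)
    (hw : ∀ e ∈ T.edgeSet, 0 < w e)
    (hL : ∀ (y y' : Y) (p : T.Walk y y'), p.IsPath → L y y' = (p.edges.map w).sum) :
    (∀ q ∈ simplexSet Y, HM L q = 2 * HL L q) ∧
    (∀ q ∈ simplexSet Y, ∀ y : Y,
      y ∈ ystar L q ↔ (fun y' => -(L y y')) ∈ vstarM L q) ∧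
    (∀ y z : Y, SM L (fun y' => -(L y y')) z = 2 * L y z) := by
  have hd : IsPathDist T w L := hL
  have hsymm := hd.symm hT.connected.preconnected
  have htri := hd.triangle hT.connected.preconnected fun e he => (hw e he).le
  have hembed := SM_neg_row hd.self_eq_zero hsymm htri
  have hHM : ∀ q ∈ simplexSet Y, HM L q = 2 * HL L q := fun q hq =>
    HM_eq_two_mul_HL hembed <| two_mul_HL_le_sum_mul_SM hd.self_eq_zero hsymm
      (fun _ _ hay => hd.exists_isStepToward hT hw hay) hq.1
  exact ⟨hHM, fun q hq => mem_ystar_iff_neg_row_mem_vstarM hembed (hHM q hq), hembed⟩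
end

section
/- For every q ∈ Δ, the Bayes risk of the Restricted-Max-Margin loss satisfies H_RM(q) = max_{Q ∈ U(q, q) ∩ C_L} ⟨L, Q⟩_F (the set U(q, q) ∩ C_L is nonempty, as it contains the diagonal matrix with entries q y on the diagonal, and is compact). -/
open Finset Set

variable {Y : Type*} [Fintype Y] [DecidableEq Y] [Nonempty Y]

/-!
Normalizing rows, a matrix of `Upoly q ∩ CL L` is the same as a family `p` of points
`p y ∈ predSet L y` with `∑ y, q y • p y = q`: its rows are `q y • p y` and its value is
`∑ y, q y * (L y ⬝ᵥ p y)`. So maximizing the value is a linear program over the compact convex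
set `∏ y, predSet L y` with the equality constraint `∑ y, q y • p y = q`. The vector `v` is the
multiplier of that constraint, and maximizing the Lagrangian over `p`, one row at a time, gives
the conditional risk of `v`. Hence `HRM` is the dual value, and the theorem is strong duality.
-/

section Duality

variable {E F : Type*} [AddCommGroup E] [Module ℝ E] [TopologicalSpace E]
  [AddCommGroup F] [Module ℝ F] [TopologicalSpace F] [IsTopologicalAddGroup F]
  [ContinuousSMul ℝ F] [LocallyConvexSpace ℝ F] [T1Space F]

theorem exists_mem_map_eq_and_le_of_forall_exists_le_lagrangian {K : Set E} (hconv : Convex ℝ K)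
    (hcomp : IsCompact K) (A : E →L[ℝ] F) (g : E →L[ℝ] ℝ) {b : F} {t : ℝ} (hb : b ∈ A '' K)
    (hdual : ∀ φ : F →L[ℝ] ℝ, ∃ x ∈ K, t ≤ g x + φ (A x - b)) :
    ∃ x ∈ K, A x = b ∧ t ≤ g x := by
  by_contra! hno
  have hdisj : Disjoint (A.prod g '' K) ({b} ×ˢ Set.Ici t) := by
    rw [Set.disjoint_left]
    rintro _ ⟨x, hx, rfl⟩ ⟨hxb, hxt⟩
    exact (hno x hx hxb).not_ge hxt
  obtain ⟨f, α, β, hα, hαβ, hβ⟩ := geometric_hahn_banach_compact_closed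
    (hconv.linear_image (A.prod g).toLinearMap) (hcomp.image (A.prod g).continuous)
    ((convex_singleton b).prod (convex_Ici t)) (isClosed_singleton.prod isClosed_Ici) hdisj
  set φ : F →L[ℝ] ℝ := f.comp (.inl ℝ F ℝ)
  set c : ℝ := f (0, 1)
  have hf (u : F) (s : ℝ) : f (u, s) = φ u + s * c := by
    rw [← smul_eq_mul, ← map_smul, ContinuousLinearMap.comp_apply, ← map_add]
    simp
  have hlt {x : E} (hx : x ∈ K) : φ (A x) + g x * c < φ b + t * c := by
    rw [← hf, ← hf]
    exact (hα _ ⟨x, hx, rfl⟩).trans (hαβ.trans (hβ (b, t) ⟨rfl, Set.self_mem_Ici⟩))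
  -- Feasibility rules out a vertical separating hyperplane.
  have hc : 0 < c := by
    obtain ⟨x₀, hx₀, hx₀b⟩ := hb
    have h := hlt hx₀
    rw [hx₀b] at h
    exact pos_of_mul_pos_right (by linarith) (sub_pos.2 (hno x₀ hx₀ hx₀b)).le
  obtain ⟨x, hx, hle⟩ := hdual (c⁻¹ • φ)
  have hscaled : t * c ≤ g x * c + φ (A x - b) := by
    calc t * c ≤ (g x + c⁻¹ * φ (A x - b)) * c := mul_le_mul_of_nonneg_right hle hc.le
      _ = g x * c + φ (A x - b) := by field_simp
  rw [map_sub] at hscaled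
  linarith [hlt hx]

end Duality

section PredictionSets

variable {α : Type*} [Fintype α] {L : α → α → ℝ} {q : α → ℝ} {y : α}

lemma mem_predSet_iff {p : α → ℝ} :
    p ∈ predSet L y ↔ p ∈ stdSimplex ℝ α ∧ ∀ z, L y ⬝ᵥ p ≤ L z ⬝ᵥ p := by
  have : Nonempty α := ⟨y⟩
  have hbdd : BddBelow (Set.range fun z => L z ⬝ᵥ p) := (Set.finite_range _).bddBelow
  exact and_congr_right fun _ =>
    ⟨fun h z => h.trans_le (ciInf_le hbdd z), fun h => le_antisymm (le_ciInf h) (ciInf_le hbdd y)⟩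

lemma isCompact_predSet : IsCompact (predSet L y) := by
  have heq : predSet L y = stdSimplex ℝ α ∩ ⋂ z, {p | L y ⬝ᵥ p ≤ L z ⬝ᵥ p} := by
    ext p
    simp only [mem_predSet_iff, Set.mem_inter_iff, Set.mem_iInter, Set.mem_ofPred_eq]
  rw [heq]
  exact (isCompact_stdSimplex ℝ α).inter_right
    (isClosed_iInter fun z => isClosed_le (by fun_prop) (by fun_prop))

lemma convex_predSet : Convex ℝ (predSet L y) := by
  intro p hp r hr a b ha hb hab
  rw [mem_predSet_iff] at hp hr ⊢
  refine ⟨convex_stdSimplex ℝ α hp.1 hr.1 ha hb hab, fun z => ?_⟩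
  simp only [dotProduct_add, dotProduct_smul]
  exact add_le_add (smul_le_smul_of_nonneg_left (hp.2 z) ha)
    (smul_le_smul_of_nonneg_left (hr.2 z) hb)

lemma single_mem_predSet [DecidableEq α] (hL : ∀ z, L y y ≤ L z y) :
    Pi.single y 1 ∈ predSet L y :=
  mem_predSet_iff.2 ⟨single_mem_stdSimplex ℝ y, fun z => by simpa using hL z⟩

lemma exists_mem_predSet_eq_sum_smul (hne : (predSet L y).Nonempty) {r : α → ℝ} (hr : 0 ≤ r)
    (hopt : ∀ z, L y ⬝ᵥ r ≤ L z ⬝ᵥ r) : ∃ p ∈ predSet L y, r = (∑ z, r z) • p := by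
  rcases (Finset.sum_nonneg fun z _ => hr z).eq_or_lt with hmass | hmass
  · obtain ⟨p, hp⟩ := hne
    refine ⟨p, hp, ?_⟩
    rw [← hmass, zero_smul]
    exact (Fintype.sum_eq_zero_iff_of_nonneg hr).1 hmass.symm
  · have hinv := (inv_pos.2 hmass).le
    refine ⟨(∑ z, r z)⁻¹ • r, mem_predSet_iff.2 ⟨⟨smul_nonneg hinv hr, ?_⟩, fun z => ?_⟩,
      (smul_inv_smul₀ hmass.ne' r).symm⟩
    · simp only [Pi.smul_apply, smul_eq_mul, ← Finset.mul_sum, inv_mul_cancel₀ hmass.ne']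
    · simp only [dotProduct_smul]
      exact smul_le_smul_of_nonneg_left (hopt z) hinv

lemma isGreatest_SRM_add (hne : (predSet L y).Nonempty) (v : α → ℝ) :
    IsGreatest ((fun p => L y ⬝ᵥ p + v ⬝ᵥ p) '' predSet L y) (SRM L v y + v y) := by
  rw [SRM, sub_add_cancel]
  exact (isCompact_predSet.image (by fun_prop)).isGreatest_sSup (hne.image _)

lemma nonneg_of_mem_Upoly {Q : α → α → ℝ} (hQ : Q ∈ Upoly q) : 0 ≤ q :=
  fun y => hQ.2.1 y ▸ Finset.sum_nonneg fun z _ => hQ.1 y z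

lemma mem_Upoly_inter_CL_iff (hne : ∀ y, (predSet L y).Nonempty) (hq : 0 ≤ q) {Q : α → α → ℝ} :
    Q ∈ Upoly q ∩ CL L ↔ ∃ p ∈ Set.univ.pi (predSet L),
      ∑ y, q y • p y = q ∧ (fun y => q y • p y) = Q := by
  constructor
  · rintro ⟨⟨hQ, hrow, hcol⟩, hC⟩
    choose p hp hQp using fun y => exists_mem_predSet_eq_sum_smul (hne y) (hQ y) (hC y)
    simp only [hrow] at hQp
    refine ⟨p, fun y _ => hp y, ?_, funext fun y => (hQp y).symm⟩
    simp only [← hQp]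
    ext z
    rw [Finset.sum_apply, hcol]
  · rintro ⟨p, hp, hcol, rfl⟩
    have hp' (y : α) := mem_predSet_iff.1 (hp y trivial)
    refine ⟨⟨fun y z => mul_nonneg (hq y) ((hp' y).1.1 z), fun y => ?_, fun z => ?_⟩, fun y z => ?_⟩
    · simp only [Pi.smul_apply, smul_eq_mul, ← Finset.mul_sum, (hp' y).1.2, mul_one]
    · simpa only [Finset.sum_apply] using congrFun hcol z
    · change L y ⬝ᵥ (q y • p y) ≤ L z ⬝ᵥ (q y • p y)
      simp only [dotProduct_smul]
      exact smul_le_smul_of_nonneg_left ((hp' y).2 z) (hq y)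

lemma single_mem_Upoly_inter_CL [DecidableEq α] (hL : ∀ y z, L y y ≤ L z y) (hq : 0 ≤ q) :
    (fun y => Pi.single y (q y)) ∈ Upoly q ∩ CL L := by
  have hp (y : α) := single_mem_predSet (hL y)
  refine (mem_Upoly_inter_CL_iff (fun y => ⟨_, hp y⟩) hq).2
    ⟨fun y => Pi.single y 1, fun y _ => hp y, ?_, ?_⟩
  · simp only [← Pi.single_smul, smul_eq_mul, mul_one, Finset.univ_sum_single]
  · simp only [← Pi.single_smul, smul_eq_mul, mul_one]

end PredictionSets

section Lagrangian

variable {α : Type*} [Fintype α]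

/-- The column sums of the matrix with rows `q y • p y`, as a function of `p`: the constraint map
of the linear program. -/
def columnMarginal (q : α → ℝ) : (α → α → ℝ) →L[ℝ] α → ℝ :=
  ∑ y, q y • .proj y

/-- The value `⟨L, Q⟩_F` of the matrix `Q` with rows `q y • p y`, as a function of `p`: the
objective of the linear program. -/
noncomputable def expectedLoss (L : α → α → ℝ) (q : α → ℝ) : (α → α → ℝ) →L[ℝ] ℝ :=
  ∑ y, q y • (dotProductBilin ℝ ℝ (L y)).toContinuousLinearMap.comp (.proj y)

variable {L : α → α → ℝ} {q : α → ℝ}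

lemma columnMarginal_apply (p : α → α → ℝ) : columnMarginal q p = ∑ y, q y • p y := by
  simp [columnMarginal]

lemma expectedLoss_apply (p : α → α → ℝ) : expectedLoss L q p = ∑ y, q y * L y ⬝ᵥ p y := by
  simp [expectedLoss]

lemma sum_dotProduct_smul_eq_expectedLoss (p : α → α → ℝ) :
    ∑ y, L y ⬝ᵥ (q y • p y) = expectedLoss L q p := by
  simp only [expectedLoss_apply, dotProduct_smul, smul_eq_mul]

lemma expectedLoss_add_dotProduct_columnMarginal_sub (v : α → ℝ) (p : α → α → ℝ) :
    expectedLoss L q p + v ⬝ᵥ (columnMarginal q p - q) =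
      ∑ y, q y * (L y ⬝ᵥ p y + v ⬝ᵥ p y - v y) := by
  have hvq : v ⬝ᵥ q = ∑ y, q y * v y := dotProduct_comm v q
  simp only [expectedLoss_apply, columnMarginal_apply, dotProduct_sub, dotProduct_sum,
    dotProduct_smul, smul_eq_mul, hvq, mul_sub, mul_add, Finset.sum_sub_distrib,
    Finset.sum_add_distrib, add_sub_assoc]

lemma isGreatest_lagrangian (hne : ∀ y, (predSet L y).Nonempty) (hq : 0 ≤ q) (v : α → ℝ) :
    IsGreatest ((fun p => expectedLoss L q p + v ⬝ᵥ (columnMarginal q p - q)) ''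
      Set.univ.pi (predSet L)) (∑ y, q y * SRM L v y) := by
  have hmax (y : α) := isGreatest_SRM_add (hne y) v
  simp only [expectedLoss_add_dotProduct_columnMarginal_sub]
  constructor
  · choose p hp hpv using fun y => (hmax y).1
    refine ⟨p, fun y _ => hp y, Finset.sum_congr rfl fun y _ => ?_⟩
    rw [← add_sub_cancel_right (SRM L v y) (v y), ← hpv y]
  · rintro _ ⟨p, hp, rfl⟩
    exact Finset.sum_le_sum fun y _ => mul_le_mul_of_nonneg_left
      (sub_le_iff_le_add.2 ((hmax y).2 ⟨p y, hp y trivial, rfl⟩)) (hq y)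

theorem sum_dotProduct_le_sum_mul_SRM (hne : ∀ y, (predSet L y).Nonempty) {Q : α → α → ℝ}
    (hQ : Q ∈ Upoly q ∩ CL L) (v : α → ℝ) : ∑ y, L y ⬝ᵥ Q y ≤ ∑ y, q y * SRM L v y := by
  have hq := nonneg_of_mem_Upoly hQ.1
  obtain ⟨p, hp, hcol, rfl⟩ := (mem_Upoly_inter_CL_iff hne hq).1 hQ
  rw [← columnMarginal_apply] at hcol
  have hle := (isGreatest_lagrangian hne hq v).2 (Set.mem_image_of_mem _ hp)
  rwa [hcol, sub_self, dotProduct_zero, add_zero, ← sum_dotProduct_smul_eq_expectedLoss] at hle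

theorem exists_le_sum_dotProduct_of_forall_le_sum_mul_SRM
    (hne : ∀ y, (predSet L y).Nonempty) (hfeas : (Upoly q ∩ CL L).Nonempty) {t : ℝ}
    (ht : ∀ v, t ≤ ∑ y, q y * SRM L v y) : ∃ Q ∈ Upoly q ∩ CL L, t ≤ ∑ y, L y ⬝ᵥ Q y := by
  classical
  obtain ⟨Q₀, hQ₀⟩ := hfeas
  have hq := nonneg_of_mem_Upoly hQ₀.1
  have hmem {Q} := mem_Upoly_inter_CL_iff hne hq (Q := Q)
  simp only [← columnMarginal_apply] at hmem
  obtain ⟨p₀, hp₀, hcol₀, -⟩ := hmem.1 hQ₀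
  have hdual (φ : (α → ℝ) →L[ℝ] ℝ) : ∃ p ∈ Set.univ.pi (predSet L),
      t ≤ expectedLoss L q p + φ (columnMarginal q p - q) := by
    obtain ⟨v, hv⟩ := (dotProductEquiv ℝ α).surjective φ.toLinearMap
    obtain ⟨p, hp, hpv⟩ := (isGreatest_lagrangian hne hq v).1
    refine ⟨p, hp, (ht v).trans_eq (hpv.symm.trans ?_)⟩
    exact congrArg (expectedLoss L q p + ·) (LinearMap.congr_fun hv _)
  obtain ⟨p, hp, hcol, hle⟩ := exists_mem_map_eq_and_le_of_forall_exists_le_lagrangian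
    (convex_pi fun _ _ => convex_predSet) (isCompact_univ_pi fun _ => isCompact_predSet)
    (columnMarginal q) (expectedLoss L q) ⟨p₀, hp₀, hcol₀⟩ hdual
  exact ⟨_, hmem.2 ⟨p, hp, hcol, rfl⟩, hle.trans_eq (sum_dotProduct_smul_eq_expectedLoss p).symm⟩

end Lagrangian

theorem stmt10_general {α : Type*} [Fintype α] {L : α → α → ℝ}
    (hne : ∀ y, (predSet L y).Nonempty) {q : α → ℝ} (hfeas : (Upoly q ∩ CL L).Nonempty) :
    IsGreatest ((fun Q => ∑ y, ∑ y', L y y' * Q y y') '' (Upoly q ∩ CL L)) (HRM L q) := by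
  have hweak {Q} (hQ : Q ∈ Upoly q ∩ CL L) := sum_dotProduct_le_sum_mul_SRM hne hQ
  have hbdd : BddBelow (Set.range fun v => ∑ y, q y * SRM L v y) :=
    hfeas.elim fun _ hQ => ⟨_, Set.forall_mem_range.2 (hweak hQ)⟩
  have hupper : ∀ Q ∈ Upoly q ∩ CL L, ∑ y, L y ⬝ᵥ Q y ≤ HRM L q :=
    fun _ hQ => le_ciInf (hweak hQ)
  obtain ⟨Q, hQ, hle⟩ :=
    exists_le_sum_dotProduct_of_forall_le_sum_mul_SRM hne hfeas (ciInf_le hbdd)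
  exact ⟨⟨Q, hQ, (hupper Q hQ).antisymm hle⟩, Set.forall_mem_image.2 hupper⟩

theorem stmt10 (Y : Type*) [Fintype Y] [DecidableEq Y] [Nonempty Y] (L : Y → Y → ℝ)
    (hcard : 2 ≤ Fintype.card Y)
    (hnonneg : ∀ y y', 0 ≤ L y y')
    (hzero : ∀ y y', L y y' = 0 ↔ y = y') :
    ∀ q ∈ simplexSet Y,
      IsGreatest ((fun Q => ∑ y, ∑ y', L y y' * Q y y') '' (Upoly q ∩ CL L)) (HRM L q) := by
  have hL (y z : Y) : L y y ≤ L z y := ((hzero y y).2 rfl).trans_le (hnonneg z y)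
  exact fun q hq => stmt10_general (fun y => ⟨_, single_mem_predSet (hL y)⟩)
    ⟨_, single_mem_Upoly_inter_CL hL hq.1⟩
end

section
/- Suppose that for every q ∈ Δ and every y ∈ Y, if q ∈ Δ(y) then q y > 0. Then for every y ∈ Y and every extreme point q of the prediction set Δ(y), the rank-one matrix q q^T (the matrix (y', y'') ↦ q y' · q y'') belongs to C_L. -/
open Finset Set

variable {Y : Type*} [Fintype Y] [DecidableEq Y] [Nonempty Y]

/-!
An extreme point `q` of `Δ(y)` is a basic feasible solution of the linear system defining `Δ(y)`: no
nonzero direction is annihilated by all the constraints that are active at `q`. These are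
normalization, `q c = 0` for `c` outside the support of `q`, and `⟨L_z, q⟩ = ⟨L_y, q⟩` for
`z ∈ y⋆(q)`, the last being trivial for `z = y`. Counting dimensions gives `|supp q| ≤ |y⋆(q)|`.
When every optimal label lies in the support, this forces `supp q = y⋆(q)`, so each row of `q qᵀ` is
either zero or a multiple of `q` by the mass of a label that is optimal for `q`.
-/

section Polyhedron

variable {𝕜 ι E F : Type*} [Field 𝕜] [LinearOrder 𝕜] [IsStrictOrderedRing 𝕜] [Finite ι]

theorem exists_pos_forall_abs_mul_le {α β : ι → 𝕜} (hα : ∀ i, 0 ≤ α i)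
    (hβ : ∀ i, α i = 0 → β i = 0) : ∃ ε > 0, ∀ i, |ε * β i| ≤ α i := by
  obtain ⟨C, hC⟩ := Finite.exists_le fun i ↦ |β i| / α i
  have hpos : 0 < max C 1 := lt_max_of_lt_right one_pos
  refine ⟨(max C 1)⁻¹, inv_pos.2 hpos, fun i ↦ ?_⟩
  rw [abs_mul, abs_of_pos (inv_pos.2 hpos), inv_mul_le_iff₀ hpos]
  rcases (hα i).eq_or_lt' with hi | hi
  · simp [hi, hβ i hi]
  · exact (div_le_iff₀ hi).1 ((hC i).trans (le_max_left C 1))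

theorem eq_zero_of_mem_extremePoints_polyhedron [AddCommGroup E] [Module 𝕜 E] [AddCommGroup F]
    [Module 𝕜 F] {g : E →ₗ[𝕜] F} {c : F} {f : ι → E →ₗ[𝕜] 𝕜} {b : ι → 𝕜} {x v : E}
    (hx : x ∈ Set.extremePoints 𝕜 {x | g x = c ∧ ∀ i, b i ≤ f i x}) (hg : g v = 0)
    (hf : ∀ i, f i x = b i → f i v = 0) : v = 0 := by
  obtain ⟨hgx, hfx⟩ := hx.1
  obtain ⟨ε, hε, hslack⟩ := exists_pos_forall_abs_mul_le (α := fun i ↦ f i x - b i)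
    (fun i ↦ sub_nonneg.2 (hfx i)) fun i hi ↦ hf i (sub_eq_zero.1 hi)
  have hsub : x - ε • v ∈ {x | g x = c ∧ ∀ i, b i ≤ f i x} := by
    refine ⟨by simp [hgx, hg], fun i ↦ ?_⟩
    rw [map_sub, map_smul, smul_eq_mul]
    linarith [(abs_le.1 (hslack i)).2]
  have hadd : x + ε • v ∈ {x | g x = c ∧ ∀ i, b i ≤ f i x} := by
    refine ⟨by simp [hgx, hg], fun i ↦ ?_⟩
    rw [map_add, map_smul, smul_eq_mul]
    linarith [(abs_le.1 (hslack i)).1]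
  let _ : Invertible (2 : 𝕜) := invertibleOfNonzero two_ne_zero
  have heq : x - ε • v = x := hx.2 hsub hadd (mem_openSegment_sub_add x (ε • v))
  exact (smul_eq_zero.1 (sub_eq_self.1 heq)).resolve_left hε.ne'

end Polyhedron

section PredictionSet

open scoped Matrix

variable {Y : Type*} [Fintype Y] {L : Y → Y → ℝ} {y : Y} {q : Y → ℝ}

theorem mem_ystar_iff : y ∈ ystar L q ↔ ∀ z, L y ⬝ᵥ q ≤ L z ⬝ᵥ q := by
  have : Nonempty Y := ⟨y⟩
  have hbdd : BddBelow (Set.range fun z ↦ L z ⬝ᵥ q) := (Set.finite_range _).bddBelow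
  exact ⟨fun h z ↦ h.le.trans (ciInf_le hbdd z), fun h ↦ le_antisymm (le_ciInf h) (ciInf_le hbdd y)⟩

theorem mem_ystar_iff_dotProduct_eq (hy : y ∈ ystar L q) {z : Y} :
    z ∈ ystar L q ↔ L z ⬝ᵥ q = L y ⬝ᵥ q :=
  ⟨fun hz ↦ hz.trans hy.symm, fun hz ↦ hz.trans hy⟩

theorem predSet_eq_setOf (L : Y → Y → ℝ) (y : Y) :
    predSet L y = {q | dotProductBilin ℝ ℝ 1 q = 1 ∧ ∀ i, (0 : Y ⊕ Y → ℝ) i ≤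
      Sum.elim (fun c ↦ LinearMap.proj c) (fun z ↦ dotProductBilin ℝ ℝ (L z - L y)) i q} := by
  ext q
  simp only [predSet, simplexSet, Set.mem_ofPred_eq, mem_ystar_iff, Sum.forall, Sum.elim_inl,
    Sum.elim_inr, LinearMap.proj_apply, dotProductBilin_apply_apply, one_dotProduct,
    sub_dotProduct, sub_nonneg, Pi.zero_apply]
  tauto

theorem eq_zero_of_mem_extremePoints_predSet {v : Y → ℝ}
    (hq : q ∈ Set.extremePoints ℝ (predSet L y)) (hsum : ∑ c, v c = 0)
    (hsupp : ∀ c, q c = 0 → v c = 0) (hrisk : ∀ z ∈ ystar L q, L z ⬝ᵥ v = L y ⬝ᵥ v) :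
    v = 0 := by
  have hy : y ∈ ystar L q := hq.1.2
  rw [predSet_eq_setOf] at hq
  refine eq_zero_of_mem_extremePoints_polyhedron hq ((one_dotProduct v).trans hsum) ?_
  rintro (c | z) hactive
  · exact hsupp c hactive
  · have hz : z ∈ ystar L q :=
      (mem_ystar_iff_dotProduct_eq hy).2 (by simpa [sub_eq_zero] using hactive)
    simpa [sub_eq_zero] using hrisk z hz

-- The summand `1` encodes normalization: it is the whole entry in the row `z = y`, and subtracting
-- that row from the others recovers the active risk constraints.
theorem linearIndepOn_support_of_mem_extremePoints_predSet
    (hq : q ∈ Set.extremePoints ℝ (predSet L y)) :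
    LinearIndepOn ℝ (fun c (z : ystar L q) ↦ L z c - L y c + 1) (Function.support q) := by
  rw [linearIndepOn_iff'']
  intro t v ht hvt hcomb c _
  have hrow : ∀ z ∈ ystar L q, L z ⬝ᵥ v - L y ⬝ᵥ v + ∑ c, v c = 0 := by
    intro z hz
    rw [Finset.sum_subset t.subset_univ fun c _ hc ↦ by rw [hvt c hc, zero_smul]] at hcomb
    rw [← one_dotProduct, ← sub_dotProduct, ← add_dotProduct, dotProduct_comm]
    simpa [dotProduct] using congrFun hcomb ⟨z, hz⟩
  have hsum : ∑ c, v c = 0 := by simpa using hrow y hq.1.2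
  refine congrFun (eq_zero_of_mem_extremePoints_predSet hq hsum (fun c hc ↦ ?_) fun z hz ↦ ?_) c
  · exact hvt c fun hct ↦ ht hct hc
  · simpa [hsum, sub_eq_zero] using hrow z hz

theorem ncard_support_le_ncard_ystar (hq : q ∈ Set.extremePoints ℝ (predSet L y)) :
    (Function.support q).ncard ≤ (ystar L q).ncard := by
  classical
  simpa [Set.ncard_eq_toFinset_card', Fintype.card_subtype] using
    (linearIndepOn_support_of_mem_extremePoints_predSet hq).fintype_card_le_finrank

theorem mul_mem_CL_iff_support_subset_ystar (hq : ∀ c, 0 ≤ q c) :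
    (fun a b ↦ q a * q b) ∈ CL L ↔ Function.support q ⊆ ystar L q := by
  have hrow : ∀ a z, ∑ c, L z c * (q a * q c) = q a * (L z ⬝ᵥ q) := fun a z ↦
    dotProduct_smul (q a) (L z) q
  simp only [CL, Set.mem_ofPred_eq, hrow]
  refine forall_congr' fun a ↦ ?_
  rw [Function.mem_support, mem_ystar_iff]
  rcases (hq a).eq_or_lt' with ha | ha
  · simp [ha]
  · simp [ha, ha.ne']

theorem stmt19_general (hq : q ∈ Set.extremePoints ℝ (predSet L y))
    (hsupp : ystar L q ⊆ Function.support q) : (fun a b ↦ q a * q b) ∈ CL L := by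
  have heq : ystar L q = Function.support q :=
    Set.eq_of_subset_of_ncard_le hsupp (ncard_support_le_ncard_ystar hq)
  exact (mul_mem_CL_iff_support_subset_ystar hq.1.1.1).2 heq.ge

end PredictionSet

theorem stmt19 (Y : Type*) [Fintype Y] [DecidableEq Y] [Nonempty Y] (L : Y → Y → ℝ)
    (hcard : 2 ≤ Fintype.card Y)
    (hnonneg : ∀ y y', 0 ≤ L y y')
    (hzero : ∀ y y', L y y' = 0 ↔ y = y')
    (hpos : ∀ q ∈ simplexSet Y, ∀ y : Y, q ∈ predSet L y → 0 < q y) :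
    ∀ y : Y, ∀ q ∈ Set.extremePoints ℝ (predSet L y),
      (fun a b => q a * q b) ∈ CL L :=
  fun _ q hq ↦ stmt19_general hq fun z hz ↦ (hpos q hq.1.1 z ⟨hq.1.1, hz⟩).ne'
end
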